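/- Let G = (V,E) be a finite simple graph with |V| ≥ 3 and set λ = 3|V|³. Then V admits a partition into three nonempty parts each inducing a clique in G if and only if there exist nonempty subsets V_1, V_2, V_3 ⊆ V with r(V_1, V_2, V_3) ≥ (|V| - 3)/2 + 18|V|³. -/

import Mathlib

open Finset

/-- The number of edges of `G` with both endpoints in `U`. -/
noncomputable def edgeCount {V : Type*} (G : SimpleGraph V) (U : Finset V) : ℕ :=
  Set.ncard {e : Sym2 V | e ∈ G.edgeSet ∧ ∀ v ∈ e, v ∈ U}

/-- The density of the subgraph of `G` induced by `U`. -/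
noncomputable def dens {V : Type*} (G : SimpleGraph V) (U : Finset V) : ℝ :=
  (edgeCount G U : ℝ) / U.card

/-- The distance between two finite sets used in the paper. -/
noncomputable def ddist {α : Type*} [DecidableEq α] (U Z : Finset α) : ℝ :=
  if U = Z then 0 else 2 - ((U ∩ Z).card : ℝ) ^ 2 / ((U.card : ℝ) * (Z.card : ℝ))

/-- The objective function of Top-3-Overlapping Densest Subgraphs for a triple. -/
noncomputable def rval3 {V : Type*} [DecidableEq V] (G : SimpleGraph V) (lam : ℝ)
    (W₁ W₂ W₃ : Finset V) : ℝ :=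
  dens G W₁ + dens G W₂ + dens G W₃ +
    lam * (ddist W₁ W₂ + ddist W₁ W₃ + ddist W₂ W₃)

lemma aux_set {V : Type*} [DecidableEq V] (U : Finset V) :
    {e : Sym2 V | ¬ e.IsDiag ∧ ∀ v ∈ e, v ∈ U} = ((U.offDiag.image Sym2.mk.uncurry : Finset (Sym2 V)) : Set (Sym2 V)) := by
  ext e
  induction e using Sym2.ind with
  | _ a b =>
    simp only [Set.mem_ofPred_eq, Sym2.mk_isDiag_iff, Sym2.mem_iff, Finset.coe_image, Set.mem_image,
      Finset.mem_coe, Finset.mem_offDiag, Prod.exists]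
    constructor
    · rintro ⟨h, h2⟩
      exact ⟨a, b, ⟨h2 a (Or.inl rfl), h2 b (Or.inr rfl), h⟩, rfl⟩
    · rintro ⟨x, y, ⟨hx, hy, hxy⟩, h⟩
      have h' : s(x, y) = s(a, b) := h
      rw [Sym2.eq_iff] at h'
      grind

lemma aux_card {V : Type*} [DecidableEq V] (U : Finset V) :
    Set.ncard {e : Sym2 V | ¬ e.IsDiag ∧ ∀ v ∈ e, v ∈ U} = U.card.choose 2 := by
  rw [aux_set, Set.ncard_coe_finset]
  exact Sym2.card_image_offDiag U

lemma aux_sub {V : Type*} (G : SimpleGraph V) (U : Finset V) :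
    {e : Sym2 V | e ∈ G.edgeSet ∧ ∀ v ∈ e, v ∈ U} ⊆ {e : Sym2 V | ¬ e.IsDiag ∧ ∀ v ∈ e, v ∈ U} :=
  fun _ h => ⟨G.not_isDiag_of_mem_edgeSet h.1, h.2⟩

lemma aux_fin {V : Type*} [DecidableEq V] (U : Finset V) :
    {e : Sym2 V | ¬ e.IsDiag ∧ ∀ v ∈ e, v ∈ U}.Finite := by
  rw [aux_set]; exact Finset.finite_toSet _

lemma aux_le {V : Type*} [DecidableEq V] (G : SimpleGraph V) (U : Finset V) :
    edgeCount G U ≤ U.card.choose 2 := by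
  rw [← aux_card]; exact Set.ncard_le_ncard (aux_sub G U) (aux_fin U)

lemma aux_eq {V : Type*} [DecidableEq V] (G : SimpleGraph V) (U : Finset V) :
    edgeCount G U = U.card.choose 2 ↔ G.IsClique (U : Set V) := by
  rw [← aux_card]
  constructor
  · intro h
    have := Set.eq_of_subset_of_ncard_le (aux_sub G U) (le_of_eq h.symm) (aux_fin U)
    intro a ha b hb hab
    have hm : s(a, b) ∈ {e : Sym2 V | ¬ e.IsDiag ∧ ∀ v ∈ e, v ∈ U} := by
      refine ⟨by simpa using hab, ?_⟩
      intro v hv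
      rw [Sym2.mem_iff] at hv
      rcases hv with rfl | rfl
      · exact ha
      · exact hb
    rw [← this] at hm
    exact hm.1
  · intro h
    unfold edgeCount
    congr 1
    apply (aux_sub G U).antisymm
    intro e
    induction e using Sym2.ind with
    | _ a b =>
      rintro ⟨h1, h2⟩
      exact ⟨h (h2 a (Sym2.mem_mk_left a b)) (h2 b (Sym2.mem_mk_right a b)) (by simpa using h1), h2⟩

lemma aux_dens_le {V : Type*} [DecidableEq V] (G : SimpleGraph V) (U : Finset V)
    (hU : U.Nonempty) : dens G U ≤ ((U.card : ℝ) - 1) / 2 := by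
  have h0 : (0 : ℝ) < U.card := by exact_mod_cast hU.card_pos
  have h1 : (edgeCount G U : ℝ) ≤ (U.card.choose 2 : ℕ) := by exact_mod_cast aux_le G U
  rw [Nat.cast_choose_two] at h1
  unfold _root_.dens
  rw [div_le_iff₀ h0]
  linarith

lemma aux_dens_eq {V : Type*} [DecidableEq V] (G : SimpleGraph V) (U : Finset V)
    (hU : U.Nonempty) : dens G U = ((U.card : ℝ) - 1) / 2 ↔ G.IsClique (U : Set V) := by
  have h0 : (0 : ℝ) < U.card := by exact_mod_cast hU.card_pos
  rw [← aux_eq, ← @Nat.cast_inj ℝ, Nat.cast_choose_two]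
  unfold _root_.dens
  rw [div_eq_iff h0.ne']
  constructor <;> intro h <;> linarith

lemma aux_dd_le {V : Type*} [DecidableEq V] (U Z : Finset V) : ddist U Z ≤ 2 := by
  unfold ddist
  split_ifs
  · norm_num
  · have : (0 : ℝ) ≤ ((U ∩ Z).card : ℝ) ^ 2 / ((U.card : ℝ) * (Z.card : ℝ)) := by positivity
    linarith

lemma aux_dd_disj {V : Type*} [DecidableEq V] (U Z : Finset V) (hU : U.Nonempty)
    (h : Disjoint U Z) : ddist U Z = 2 := by
  unfold ddist
  rw [if_neg, Finset.disjoint_iff_inter_eq_empty.mp h]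
  · simp
  · rintro rfl
    exact hU.ne_empty (by simpa using h)

lemma aux_dd_inter {V : Type*} [Fintype V] [DecidableEq V] (U Z : Finset V)
    (h : ¬ Disjoint U Z) (hV : 3 ≤ Fintype.card V) :
    3 * (Fintype.card V : ℝ) ^ 3 * ddist U Z ≤ 6 * (Fintype.card V : ℝ) ^ 3 - 3 * Fintype.card V := by
  have hn : (3 : ℝ) ≤ Fintype.card V := by exact_mod_cast hV
  have hi : (U ∩ Z).Nonempty := by
    rwa [Finset.nonempty_iff_ne_empty, Ne, ← Finset.disjoint_iff_inter_eq_empty]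
  have hi1 : (1 : ℝ) ≤ (U ∩ Z).card := by exact_mod_cast hi.card_pos
  have hU : (0 : ℝ) < U.card := by exact_mod_cast (hi.mono inter_subset_left).card_pos
  have hZ : (0 : ℝ) < Z.card := by exact_mod_cast (hi.mono inter_subset_right).card_pos
  have hUn : (U.card : ℝ) ≤ Fintype.card V := by exact_mod_cast U.card_le_univ
  have hZn : (Z.card : ℝ) ≤ Fintype.card V := by exact_mod_cast Z.card_le_univ
  have key : ddist U Z ≤ 2 - 1 / (Fintype.card V : ℝ) ^ 2 := by
    have h1 : 1 / (Fintype.card V : ℝ) ^ 2 ≤ 1 := by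
      rw [div_le_one (by positivity)]; nlinarith
    unfold ddist
    split_ifs
    · linarith
    · have : 1 / (Fintype.card V : ℝ) ^ 2 ≤ ((U ∩ Z).card : ℝ) ^ 2 / ((U.card : ℝ) * (Z.card : ℝ)) := by
        rw [sq (Fintype.card V : ℝ)]
        gcongr
        nlinarith
      linarith
  calc _ ≤ 3 * (Fintype.card V : ℝ) ^ 3 * (2 - 1 / (Fintype.card V : ℝ) ^ 2) := by gcongr
    _ = _ := by field_simp; ring

/-- correctness of the reduction from 3-Clique Partition. -/
theorem stmt_17 {V : Type*} [Fintype V] [DecidableEq V]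
    (G : SimpleGraph V) (hV : 3 ≤ Fintype.card V) :
    (∃ V₁ V₂ V₃ : Finset V,
      V₁.Nonempty ∧ V₂.Nonempty ∧ V₃.Nonempty ∧
      Disjoint V₁ V₂ ∧ Disjoint V₁ V₃ ∧ Disjoint V₂ V₃ ∧
      V₁ ∪ V₂ ∪ V₃ = Finset.univ ∧
      G.IsClique (V₁ : Set V) ∧ G.IsClique (V₂ : Set V) ∧ G.IsClique (V₃ : Set V)) ↔
    (∃ V₁ V₂ V₃ : Finset V,
      V₁.Nonempty ∧ V₂.Nonempty ∧ V₃.Nonempty ∧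
      rval3 G (3 * (Fintype.card V : ℝ) ^ 3) V₁ V₂ V₃ ≥
        ((Fintype.card V : ℝ) - 3) / 2 + 18 * (Fintype.card V : ℝ) ^ 3) := by
  have hn : (3 : ℝ) ≤ Fintype.card V := by exact_mod_cast hV
  have hn3 : (0 : ℝ) ≤ 3 * (Fintype.card V : ℝ) ^ 3 := by positivity
  constructor
  · rintro ⟨A, B, C, hA, hB, hC, hAB, hAC, hBC, hu, cA, cB, cC⟩
    refine ⟨A, B, C, hA, hB, hC, ?_⟩
    have hc : A.card + B.card + C.card = Fintype.card V := by
      rw [← Finset.card_univ, ← hu, Finset.card_union_of_disjoint, Finset.card_union_of_disjoint hAB]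
      exact Finset.disjoint_union_left.mpr ⟨hAC, hBC⟩
    have hc' : (A.card : ℝ) + B.card + C.card = Fintype.card V := by exact_mod_cast hc
    unfold rval3
    rw [aux_dd_disj A B hA hAB, aux_dd_disj A C hA hAC, aux_dd_disj B C hB hBC,
      (aux_dens_eq G A hA).mpr cA, (aux_dens_eq G B hB).mpr cB, (aux_dens_eq G C hC).mpr cC]
    linarith
  · rintro ⟨A, B, C, hA, hB, hC, hr⟩
    unfold rval3 at hr
    have dA := aux_dens_le G A hA
    have dB := aux_dens_le G B hB
    have dC := aux_dens_le G C hC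
    have nA : (A.card : ℝ) ≤ Fintype.card V := by exact_mod_cast A.card_le_univ
    have nB : (B.card : ℝ) ≤ Fintype.card V := by exact_mod_cast B.card_le_univ
    have nC : (C.card : ℝ) ≤ Fintype.card V := by exact_mod_cast C.card_le_univ
    have lAB := mul_le_mul_of_nonneg_left (aux_dd_le A B) hn3
    have lAC := mul_le_mul_of_nonneg_left (aux_dd_le A C) hn3
    have lBC := mul_le_mul_of_nonneg_left (aux_dd_le B C) hn3
    have hAB : Disjoint A B := by
      by_contra h
      have := aux_dd_inter A B h hV
      linarith
    have hAC : Disjoint A C := by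
      by_contra h
      have := aux_dd_inter A C h hV
      linarith
    have hBC : Disjoint B C := by
      by_contra h
      have := aux_dd_inter B C h hV
      linarith
    have hc : (A ∪ B ∪ C).card = A.card + B.card + C.card := by
      rw [Finset.card_union_of_disjoint, Finset.card_union_of_disjoint hAB]
      exact Finset.disjoint_union_left.mpr ⟨hAC, hBC⟩
    have hle := (A ∪ B ∪ C).card_le_univ
    have hle' : (A.card : ℝ) + B.card + C.card ≤ Fintype.card V := by
      rw [hc] at hle; exact_mod_cast hle
    refine ⟨A, B, C, hA, hB, hC, hAB, hAC, hBC, ?_, (aux_dens_eq G A hA).mp (by linarith),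
      (aux_dens_eq G B hB).mp (by linarith), (aux_dens_eq G C hC).mp (by linarith)⟩
    apply (Finset.card_eq_iff_eq_univ _).mp
    apply le_antisymm hle
    rw [hc]
    have : (Fintype.card V : ℝ) ≤ A.card + B.card + C.card := by linarith
    exact_mod_cast this
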